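/- arXiv:1709.08894 — 2 statements merged into one kernel-verified Lean document; each statement's English description precedes it below -/
import Mathlib

section
/- Let μ and ν be two probability measures on ℝⁿ with finite first moments (∫‖x‖ dμ < ∞ and ∫‖x‖ dν < ∞), and let π* be a coupling of μ and ν. Then π* minimizes ∫‖x−y‖ dπ(x,y) over all couplings π of μ and ν if and only if every 1-Lipschitz function f* : ℝⁿ → ℝ that maximizes ∫ f dμ − ∫ f dν over all 1-Lipschitz f satisfies f*(x) − f*(y) = ‖x − y‖ for all (x,y) in the (topological) support of π*. -/
open MeasureTheory

/-- The (topological) support of a measure: the set of points all of whose open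
neighbourhoods have positive measure. -/
def measureSupport {X : Type*} [TopologicalSpace X] [MeasurableSpace X] (π : Measure X) : Set X :=
  {x | ∀ U : Set X, IsOpen U → x ∈ U → 0 < π U}

/-!
Complementary slackness: a coupling `π` and a 1-Lipschitz `f` satisfy
`∫ f ∂μ - ∫ f ∂ν = ∫ (f x - f y) ∂π ≤ ∫ dist x y ∂π`, with equality iff `f x - f y = dist x y` on
the support of `π`. Hence a coupling exhausted by an optimal critic (which exists by an
Arzelà–Ascoli argument) is optimal. Conversely, the support of an optimal coupling is cyclically
monotone: otherwise, exchanging mass between small neighbourhoods of finitely many of its points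
would lower the cost. Cyclic monotonicity says that no closed walk gains by being credited
`dist x y` for each jump from `x` to `y` along the support, so the greatest net credit of a walk
from `z` to a base point is finite; as a function of `z` it is a 1-Lipschitz critic attaining
equality, and therefore every optimal critic attains it.
-/

open Filter Set Topology
open scoped ENNReal NNReal ProbabilityTheory

/-- `S` is `c`-cyclically monotone: rearranging the pairing of finitely many points of `S` does not
lower their total cost. -/
def IsCyclicallyMonotone {X Y : Type*} (c : X × Y → ℝ) (S : Set (X × Y)) : Prop :=
  ∀ (n : ℕ) (p : Fin n → X × Y) (σ : Equiv.Perm (Fin n)), (∀ i, p i ∈ S) →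
    ∑ i, c (p i) ≤ ∑ i, c ((p (σ i)).1, (p i).2)

section Coupling

variable {X Y : Type*} [MeasurableSpace X] [MeasurableSpace Y]

/-- `π` is a transport plan from `μ` to `ν`: its marginals are `μ` and `ν`. -/
structure IsCoupling (π : Measure (X × Y)) (μ : Measure X) (ν : Measure Y) : Prop where
  fst_eq : π.fst = μ
  snd_eq : π.snd = ν

/-- `π` minimizes the transport cost `∫ c ∂π` among the couplings of `μ` and `ν`. A coupling against
which `c` is not integrable counts with cost `0`, so this is meant for costs that are integrable
against all couplings. -/
structure IsOptimalCoupling (c : X × Y → ℝ) (π : Measure (X × Y)) (μ : Measure X)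
    (ν : Measure Y) : Prop extends IsCoupling π μ ν where
  integral_le : ∀ ρ, IsCoupling ρ μ ν → ∫ p, c p ∂π ≤ ∫ p, c p ∂ρ

variable {π η θ : Measure (X × Y)} {μ : Measure X} {ν : Measure Y} {c : X × Y → ℝ}

namespace IsCoupling

lemma measure_univ_left (hπ : IsCoupling π μ ν) : μ univ = π univ := by
  rw [← hπ.fst_eq, Measure.fst_univ]

lemma measure_univ_right (hπ : IsCoupling π μ ν) : ν univ = π univ := by
  rw [← hπ.snd_eq, Measure.snd_univ]

lemma isFiniteMeasure [IsFiniteMeasure μ] (hπ : IsCoupling π μ ν) : IsFiniteMeasure π :=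
  ⟨hπ.measure_univ_left ▸ measure_lt_top μ univ⟩

lemma isProbabilityMeasure [IsProbabilityMeasure μ] (hπ : IsCoupling π μ ν) :
    IsProbabilityMeasure π :=
  ⟨hπ.measure_univ_left ▸ measure_univ⟩

lemma smul (hπ : IsCoupling π μ ν) (a : ℝ≥0∞) : IsCoupling (a • π) (a • μ) (a • ν) where
  fst_eq := by rw [← hπ.fst_eq, Measure.fst, Measure.map_smul, Measure.fst]
  snd_eq := by rw [← hπ.snd_eq, Measure.snd, Measure.map_smul, Measure.snd]

lemma sum {ι : Type*} [Fintype ι] {π : ι → Measure (X × Y)} {μ : ι → Measure X}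
    {ν : ι → Measure Y} (hπ : ∀ i, IsCoupling (π i) (μ i) (ν i)) :
    IsCoupling (∑ i, π i) (∑ i, μ i) (∑ i, ν i) where
  fst_eq := by
    rw [Measure.fst, Measure.map_finset_sum' measurable_fst.aemeasurable]
    exact Finset.sum_congr rfl fun i _ => (hπ i).fst_eq
  snd_eq := by
    rw [Measure.snd, Measure.map_finset_sum' measurable_snd.aemeasurable]
    exact Finset.sum_congr rfl fun i _ => (hπ i).snd_eq

lemma integrable_comp_fst (hπ : IsCoupling π μ ν) {f : X → ℝ} (hf : Integrable f μ) :
    Integrable (fun p => f p.1) π := by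
  rw [← hπ.fst_eq] at hf
  exact hf.comp_measurable measurable_fst

lemma integrable_comp_snd (hπ : IsCoupling π μ ν) {g : Y → ℝ} (hg : Integrable g ν) :
    Integrable (fun p => g p.2) π := by
  rw [← hπ.snd_eq] at hg
  exact hg.comp_measurable measurable_snd

lemma integral_sub_eq (hπ : IsCoupling π μ ν) {f : X → ℝ} {g : Y → ℝ} (hf : Integrable f μ)
    (hg : Integrable g ν) : ∫ p, (f p.1 - g p.2) ∂π = ∫ x, f x ∂μ - ∫ y, g y ∂ν := by
  rw [integral_sub (hπ.integrable_comp_fst hf) (hπ.integrable_comp_snd hg)]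
  obtain ⟨rfl, rfl⟩ := hπ
  rw [Measure.fst, Measure.snd, integral_map measurable_fst.aemeasurable hf.aestronglyMeasurable,
    integral_map measurable_snd.aemeasurable hg.aestronglyMeasurable]

end IsCoupling

lemma isCoupling_prod (μ : Measure X) (ν : Measure Y) [IsProbabilityMeasure μ]
    [IsProbabilityMeasure ν] : IsCoupling (μ.prod ν) μ ν :=
  ⟨Measure.fst_prod, Measure.snd_prod⟩

lemma cond_le_inv_smul {Ω : Type*} [MeasurableSpace Ω] (μ : Measure Ω) (s : Set Ω) :
    μ[|s] ≤ (μ s)⁻¹ • μ := by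
  rw [ProbabilityTheory.cond]
  gcongr
  exact Measure.restrict_le_self

lemma ae_prod_fst_snd_cond_mem {U U' : Set X} {V V' : Set Y} (hU : MeasurableSet U)
    (hU' : MeasurableSet U') (hV : MeasurableSet V) (hV' : MeasurableSet V') :
    ∀ᵐ p ∂(π[|U ×ˢ V'].fst.prod π[|U' ×ˢ V].snd), p.1 ∈ U ∧ p.2 ∈ V := by
  have hfst : ∀ᵐ x ∂π[|U ×ˢ V'].fst, x ∈ U :=
    (ae_map_iff measurable_fst.aemeasurable hU).2 <|
      ProbabilityTheory.ae_cond_of_forall_mem (hU.prod hV') fun p hp => hp.1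
  have hsnd : ∀ᵐ y ∂π[|U' ×ˢ V].snd, y ∈ V :=
    (ae_map_iff measurable_snd.aemeasurable hV).2 <|
      ProbabilityTheory.ae_cond_of_forall_mem (hU'.prod hV) fun p hp => hp.2
  exact (Measure.quasiMeasurePreserving_fst.ae hfst).and
    (Measure.quasiMeasurePreserving_snd.ae hsnd)

namespace IsOptimalCoupling

-- The competitor `π - η + θ` replaces the part `η` of `π` by `θ`.
lemma integral_le_of_le [IsFiniteMeasure η] (hπ : IsOptimalCoupling c π μ ν) (hc : Integrable c π)
    (hη : η ≤ π) (hθ : IsCoupling θ η.fst η.snd) (hcθ : Integrable c θ) :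
    ∫ p, c p ∂η ≤ ∫ p, c p ∂θ := by
  have hsplit : π - η + η = π := Measure.sub_add_cancel_of_le hη
  have hcrest : Integrable c (π - η) := hc.mono_measure Measure.sub_le
  have hcompetitor : IsCoupling (π - η + θ) μ ν := by
    constructor
    · rw [Measure.fst_add, hθ.fst_eq, ← Measure.fst_add, hsplit, hπ.fst_eq]
    · rw [Measure.snd_add, hθ.snd_eq, ← Measure.snd_add, hsplit, hπ.snd_eq]
  have hle : ∫ p, c p ∂(π - η + η) ≤ ∫ p, c p ∂(π - η + θ) := by
    rw [hsplit]
    exact hπ.integral_le _ hcompetitor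
  rw [integral_add_measure hcrest (hc.mono_measure hη), integral_add_measure hcrest hcθ] at hle
  exact le_of_add_le_add_left hle

lemma integral_le_of_le_smul [IsFiniteMeasure η] (hπ : IsOptimalCoupling c π μ ν)
    (hc : Integrable c π) {K : ℝ≥0∞} (hK₀ : K ≠ 0) (hK : K ≠ ∞) (hη : η ≤ K • π)
    (hθ : IsCoupling θ η.fst η.snd) (hcθ : Integrable c θ) :
    ∫ p, c p ∂η ≤ ∫ p, c p ∂θ := by
  have hKinv : K⁻¹ ≠ ∞ := ENNReal.inv_ne_top.2 hK₀
  have : IsFiniteMeasure (K⁻¹ • η) := Measure.smul_finite η hKinv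
  have hscaled : K⁻¹ • η ≤ π := calc
    K⁻¹ • η ≤ K⁻¹ • K • π := by gcongr
    _ = π := by rw [smul_smul, ENNReal.inv_mul_cancel hK₀ hK, one_smul]
  have hself : IsCoupling η η.fst η.snd := ⟨rfl, rfl⟩
  have hθscaled : IsCoupling (K⁻¹ • θ) (K⁻¹ • η).fst (K⁻¹ • η).snd := by
    rw [(hself.smul K⁻¹).fst_eq, (hself.smul K⁻¹).snd_eq]
    exact hθ.smul K⁻¹
  have hle := hπ.integral_le_of_le hc hscaled hθscaled (hcθ.smul_measure hKinv)
  rw [integral_smul_measure, integral_smul_measure] at hle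
  exact le_of_smul_le_smul_of_pos_left hle
    (ENNReal.toReal_pos (ENNReal.inv_ne_zero.2 hK) hKinv)

lemma sum_integral_cond_le [IsFiniteMeasure π] (hπ : IsOptimalCoupling c π μ ν)
    (hc : Integrable c π) {ι : Type*} [Fintype ι] {A : ι → Set (X × Y)}
    (hA : ∀ i, π (A i) ≠ 0) (σ : Equiv.Perm ι)
    (hprod : ∀ i, Integrable c (π[|A (σ i)].fst.prod π[|A i].snd)) :
    ∑ i, ∫ p, c p ∂π[|A i] ≤ ∑ i, ∫ p, c p ∂(π[|A (σ i)].fst.prod π[|A i].snd) := by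
  rcases isEmpty_or_nonempty ι with _ | _
  · simp
  have hcond : ∀ i, IsProbabilityMeasure π[|A i] := fun i =>
    ProbabilityTheory.cond_isProbabilityMeasure (hA i)
  have hccond : ∀ i, Integrable c π[|A i] := fun i =>
    (hc.smul_measure (ENNReal.inv_ne_top.2 (hA i))).mono_measure (cond_le_inv_smul π (A i))
  have hle : ∑ i, π[|A i] ≤ (∑ i, (π (A i))⁻¹) • π := by
    rw [Finset.sum_smul]
    exact Finset.sum_le_sum fun i _ => cond_le_inv_smul π (A i)
  have hK₀ : ∑ i, (π (A i))⁻¹ ≠ 0 := by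
    simp [Finset.sum_eq_zero_iff, measure_ne_top]
  have hK : ∑ i, (π (A i))⁻¹ ≠ ∞ :=
    ENNReal.sum_ne_top.2 fun i _ => ENNReal.inv_ne_top.2 (hA i)
  have hself : IsCoupling (∑ i, π[|A i]) (∑ i, π[|A i].fst) (∑ i, π[|A i].snd) :=
    IsCoupling.sum fun i => ⟨rfl, rfl⟩
  have hexchanged : IsCoupling (∑ i, π[|A (σ i)].fst.prod π[|A i].snd)
      (∑ i, π[|A i]).fst (∑ i, π[|A i]).snd := by
    rw [hself.fst_eq, hself.snd_eq, ← Equiv.sum_comp σ fun i => π[|A i].fst]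
    exact IsCoupling.sum fun i => isCoupling_prod _ _
  have hsum := hπ.integral_le_of_le_smul hc hK₀ hK hle hexchanged
    (integrable_finsetSum_measure.2 fun i _ => hprod i)
  rwa [integral_finsetSum_measure fun i _ => hccond i,
    integral_finsetSum_measure fun i _ => hprod i] at hsum

end IsOptimalCoupling

end Coupling

section SupportOfOptimalCoupling

lemma integrable_of_ae_abs_sub_le {Ω : Type*} [MeasurableSpace Ω] {ρ : Measure Ω}
    [IsFiniteMeasure ρ] {f : Ω → ℝ} {a ε : ℝ} (hf : AEStronglyMeasurable f ρ)
    (h : ∀ᵐ x ∂ρ, |f x - a| ≤ ε) : Integrable f ρ := by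
  have hsub : Integrable (fun x => f x - a) ρ := .of_bound (hf.sub aestronglyMeasurable_const) ε h
  simpa using (integrable_add_const_iff (c := a)).2 hsub

lemma abs_integral_sub_le_of_ae_abs_sub_le {Ω : Type*} [MeasurableSpace Ω] {ρ : Measure Ω}
    [IsProbabilityMeasure ρ] {f : Ω → ℝ} {a ε : ℝ} (hf : Integrable f ρ)
    (h : ∀ᵐ x ∂ρ, |f x - a| ≤ ε) : |∫ x, f x ∂ρ - a| ≤ ε := by
  have hmean : ∫ x, (f x - a) ∂ρ = ∫ x, f x ∂ρ - a := by
    rw [integral_sub hf (integrable_const a), integral_const, probReal_univ, one_smul]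
  have hnorm : ∀ᵐ x ∂ρ, ‖f x - a‖ ≤ ε := h
  simpa [hmean] using norm_integral_le_of_norm_le_const hnorm

variable {X Y : Type*} [TopologicalSpace X] [TopologicalSpace Y] {c : X × Y → ℝ}

lemma exists_isOpen_forall_abs_sub_le {ι κ : Type*} [Finite ι] [Finite κ] (hc : Continuous c)
    (x : ι → X) (y : κ → Y) {ε : ℝ} (hε : 0 < ε) :
    ∃ (U : ι → Set X) (V : κ → Set Y), (∀ i, IsOpen (U i) ∧ x i ∈ U i) ∧
      (∀ j, IsOpen (V j) ∧ y j ∈ V j) ∧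
      ∀ i j, ∀ u ∈ U i, ∀ v ∈ V j, |c (u, v) - c (x i, y j)| ≤ ε := by
  have hlocal : ∀ i j, ∃ (U : Set X) (V : Set Y), IsOpen U ∧ IsOpen V ∧ x i ∈ U ∧ y j ∈ V ∧
      U ×ˢ V ⊆ c ⁻¹' Metric.ball (c (x i, y j)) ε := fun i j =>
    isOpen_prod_iff.1 (Metric.isOpen_ball.preimage hc) _ _ (Metric.mem_ball_self hε)
  choose U V hU hV hxU hyV hUV using hlocal
  refine ⟨fun i => ⋂ j, U i j, fun j => ⋂ i, V i j,
    fun i => ⟨isOpen_iInter_of_finite (hU i), mem_iInter.2 (hxU i)⟩,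
    fun j => ⟨isOpen_iInter_of_finite (hV · j), mem_iInter.2 (hyV · j)⟩, ?_⟩
  intro i j u hu v hv
  have hball : dist (c (u, v)) (c (x i, y j)) < ε :=
    hUV i j ⟨mem_iInter.1 hu j, mem_iInter.1 hv i⟩
  exact hball.le

variable [MeasurableSpace X] [MeasurableSpace Y] [OpensMeasurableSpace X] [OpensMeasurableSpace Y]
  [SecondCountableTopologyEither X Y] {π : Measure (X × Y)} [IsFiniteMeasure π]
  {μ : Measure X} {ν : Measure Y}

-- Compare costs after conditioning `π` on neighbourhoods of the `p i` on which `c` varies by at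
-- most `ε`.
lemma IsOptimalCoupling.sum_sub_le_sum_add_of_mem_support (hπ : IsOptimalCoupling c π μ ν)
    (hcont : Continuous c) (hc : Integrable c π) {ι : Type*} [Fintype ι] {p : ι → X × Y}
    (hp : ∀ i, p i ∈ π.support) (σ : Equiv.Perm ι) {ε : ℝ} (hε : 0 < ε) :
    ∑ i, (c (p i) - ε) ≤ ∑ i, (c ((p (σ i)).1, (p i).2) + ε) := by
  obtain ⟨U, V, hU, hV, hUV⟩ :=
    exists_isOpen_forall_abs_sub_le hcont (fun i => (p i).1) (fun i => (p i).2) hε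
  have hUV_open : ∀ i, IsOpen (U i ×ˢ V i) := fun i => (hU i).1.prod (hV i).1
  have hpos : ∀ i, π (U i ×ˢ V i) ≠ 0 := fun i =>
    ((Measure.mem_support_iff_forall _).1 (hp i) _
      ((hUV_open i).mem_nhds ⟨(hU i).2, (hV i).2⟩)).ne'
  have hcond : ∀ i, IsProbabilityMeasure π[|U i ×ˢ V i] := fun i =>
    ProbabilityTheory.cond_isProbabilityMeasure (hpos i)
  have hcond_near : ∀ i, ∀ᵐ q ∂π[|U i ×ˢ V i], |c q - c (p i)| ≤ ε := fun i =>
    ProbabilityTheory.ae_cond_of_forall_mem (hUV_open i).measurableSet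
      fun q hq => hUV i i q.1 hq.1 q.2 hq.2
  have hprod_near : ∀ i, ∀ᵐ q ∂(π[|U (σ i) ×ˢ V (σ i)].fst.prod π[|U i ×ˢ V i].snd),
      |c q - c ((p (σ i)).1, (p i).2)| ≤ ε := fun i => by
    filter_upwards [ae_prod_fst_snd_cond_mem (π := π) (hU (σ i)).1.measurableSet
      (hU i).1.measurableSet (hV i).1.measurableSet (hV (σ i)).1.measurableSet] with q hq
    exact hUV (σ i) i q.1 hq.1 q.2 hq.2
  have hprod_int : ∀ i, Integrable c (π[|U (σ i) ×ˢ V (σ i)].fst.prod π[|U i ×ˢ V i].snd) :=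
    fun i => integrable_of_ae_abs_sub_le hcont.aestronglyMeasurable (hprod_near i)
  calc ∑ i, (c (p i) - ε)
      ≤ ∑ i, ∫ q, c q ∂π[|U i ×ˢ V i] := Finset.sum_le_sum fun i _ =>
        sub_le_of_abs_sub_le_left <| abs_integral_sub_le_of_ae_abs_sub_le
          (integrable_of_ae_abs_sub_le hcont.aestronglyMeasurable (hcond_near i)) (hcond_near i)
    _ ≤ ∑ i, ∫ q, c q ∂(π[|U (σ i) ×ˢ V (σ i)].fst.prod π[|U i ×ˢ V i].snd) :=
        hπ.sum_integral_cond_le hc hpos σ hprod_int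
    _ ≤ ∑ i, (c ((p (σ i)).1, (p i).2) + ε) := Finset.sum_le_sum fun i _ =>
        sub_le_iff_le_add'.1
          (le_of_abs_le (abs_integral_sub_le_of_ae_abs_sub_le (hprod_int i) (hprod_near i)))

theorem IsOptimalCoupling.isCyclicallyMonotone_support (hπ : IsOptimalCoupling c π μ ν)
    (hcont : Continuous c) (hc : Integrable c π) : IsCyclicallyMonotone c π.support := by
  intro n p σ hp
  have hleft : Tendsto (fun ε => ∑ i, (c (p i) - ε)) (𝓝[>] 0) (𝓝 (∑ i, c (p i))) :=
    (Continuous.tendsto' (by fun_prop) 0 _ (by simp)).mono_left nhdsWithin_le_nhds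
  have hright : Tendsto (fun ε => ∑ i, (c ((p (σ i)).1, (p i).2) + ε)) (𝓝[>] 0)
      (𝓝 (∑ i, c ((p (σ i)).1, (p i).2))) :=
    (Continuous.tendsto' (by fun_prop) 0 _ (by simp)).mono_left nhdsWithin_le_nhds
  exact le_of_tendsto_of_tendsto hleft hright <| eventually_mem_nhdsWithin.mono fun ε hε =>
    hπ.sum_sub_le_sum_add_of_mem_support hcont hc hp σ hε

end SupportOfOptimalCoupling

section Potential

variable {X : Type*} [PseudoMetricSpace X]

/-- The net length of the walk from `z` to `w` through the pairs in the list: moving to the first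
point of a pair costs the distance, and jumping from `x` to `y` along a pair `(x, y)` is credited
`dist x y`. -/
def chainCost (z w : X) : List (X × X) → ℝ
  | [] => dist z w
  | p :: l => dist z p.1 - dist p.1 p.2 + chainCost p.2 w l

lemma chainCost_le_dist_add (z z' w : X) (l : List (X × X)) :
    chainCost z w l ≤ dist z z' + chainCost z' w l := by
  cases l with
  | nil => exact dist_triangle z z' w
  | cons p l =>
    simp only [chainCost]
    linarith [dist_triangle z z' p.1]

lemma chainCost_ofFn {n : ℕ} (p : Fin (n + 1) → X × X) (z w : X) :
    chainCost z w (List.ofFn p) = dist z (p 0).1 +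
      ∑ i : Fin n, dist (p i.castSucc).2 (p i.succ).1 + dist (p (Fin.last n)).2 w -
      ∑ i, dist (p i).1 (p i).2 := by
  induction n generalizing z with
  | zero =>
    rw [List.ofFn_succ, List.ofFn_zero, chainCost, chainCost, Fin.sum_univ_zero, Fin.sum_univ_one,
      Fin.last_zero]
    ring
  | succ n ih =>
    rw [List.ofFn_succ, chainCost, ih, Fin.sum_univ_succ (fun i => dist (p i).1 (p i).2),
      Fin.sum_univ_succ (fun i => dist (p i.castSucc).2 (p i.succ).1)]
    simp only [Fin.succ_last, Fin.castSucc_zero, Fin.succ_castSucc]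
    ring

variable {S : Set (X × X)}

-- Returning from `w` to `z` closes the walk up to a cyclic rearrangement of its pairs.
lemma IsCyclicallyMonotone.neg_dist_le_chainCost
    (hS : IsCyclicallyMonotone (fun p : X × X => dist p.1 p.2) S) (z w : X) {l : List (X × X)}
    (hl : ∀ p ∈ l, p ∈ S) : -dist z w ≤ chainCost z w l := by
  obtain ⟨n, p, rfl⟩ : ∃ n, ∃ p : Fin n → X × X, l = List.ofFn p := ⟨_, l.get, by simp⟩
  cases n with
  | zero => simp only [List.ofFn_zero, chainCost]; linarith [dist_nonneg (x := z) (y := w)]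
  | succ n =>
    have hcycle := hS (n + 1) p (finRotate (n + 1)) fun i => hl _ (List.mem_ofFn.2 ⟨i, rfl⟩)
    rw [Fin.sum_univ_castSucc (fun i => dist (p (finRotate (n + 1) i)).1 (p i).2)] at hcycle
    simp only [finRotate_apply, Fin.coeSucc_eq_succ, Fin.last_add_one,
      dist_comm (p (Fin.succ _)).1] at hcycle
    rw [chainCost_ofFn]
    have hclose := dist_triangle4 (p 0).1 z w (p (Fin.last n)).2
    rw [dist_comm _ z, dist_comm w] at hclose
    linarith

theorem IsCyclicallyMonotone.exists_lipschitzWith_one [Nonempty X]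
    (hS : IsCyclicallyMonotone (fun p : X × X => dist p.1 p.2) S) :
    ∃ f : X → ℝ, LipschitzWith 1 f ∧ ∀ p ∈ S, f p.1 - f p.2 = dist p.1 p.2 := by
  obtain ⟨w⟩ := ‹Nonempty X›
  let netDist (z : X) : ℝ := ⨅ l : {l : List (X × X) // ∀ p ∈ l, p ∈ S}, chainCost z w l
  have hnonempty : Nonempty {l : List (X × X) // ∀ p ∈ l, p ∈ S} := ⟨[], by simp⟩
  have hbdd (z : X) : BddBelow (range fun l : {l : List (X × X) // ∀ p ∈ l, p ∈ S} =>
      chainCost z w l) :=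
    ⟨-dist z w, forall_mem_range.2 fun l => hS.neg_dist_le_chainCost z w l.2⟩
  have hlip : ∀ z z', netDist z ≤ netDist z' + dist z z' := fun z z' => by
    rw [← sub_le_iff_le_add]
    refine le_ciInf fun l => ?_
    linarith [ciInf_le (hbdd z) l, chainCost_le_dist_add z z' w l]
  have hjump : ∀ p ∈ S, netDist p.1 + dist p.1 p.2 ≤ netDist p.2 := fun p hp => by
    refine le_ciInf fun l => ?_
    have hcons := ciInf_le (hbdd p.1) ⟨p :: l, List.forall_mem_cons.2 ⟨hp, l.2⟩⟩
    simp only [chainCost, dist_self] at hcons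
    linarith
  refine ⟨fun z => -netDist z, LipschitzWith.of_le_add fun z z' => ?_, fun p hp => ?_⟩
  · linarith [hlip z' z, dist_comm z z']
  · linarith [hjump p hp, hlip p.2 p.1, dist_comm p.1 p.2]

end Potential

section LipschitzFunctions

variable {X : Type*} [PseudoMetricSpace X]

lemma abs_le_dist_of_lipschitzWith_one {f : X → ℝ} (hf : LipschitzWith 1 f) {x₀ : X}
    (hx₀ : f x₀ = 0) (x : X) : |f x| ≤ dist x x₀ := by
  simpa [Real.dist_eq, hx₀] using hf.dist_le_mul x x₀

lemma sub_le_dist_of_lipschitzWith_one {f : X → ℝ} (hf : LipschitzWith 1 f) (x y : X) :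
    f x - f y ≤ dist x y :=
  sub_le_iff_le_add'.2 (by simpa using hf.le_add_mul x y)

-- A cluster point for pointwise convergence is a subsequential limit on a countable dense set, and
-- equicontinuity extends the convergence to the whole space.
lemma exists_subseq_tendsto_of_lipschitzWith {Y : Type*} [PseudoMetricSpace Y] [ProperSpace Y]
    [TopologicalSpace.SeparableSpace X] {K : ℝ≥0} {F : ℕ → X → Y}
    (hF : ∀ k, LipschitzWith K (F k)) (hbdd : ∀ x, Bornology.IsBounded (range (F · x))) :
    ∃ (f : X → Y) (φ : ℕ → ℕ), LipschitzWith K f ∧ StrictMono φ ∧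
      ∀ x, Tendsto (fun k => F (φ k) x) atTop (𝓝 (f x)) := by
  have hcompact : IsCompact (univ.pi fun x => closure (range (F · x))) :=
    isCompact_univ_pi fun x => (hbdd x).isCompact_closure
  obtain ⟨f, -, hf⟩ := hcompact.exists_mapClusterPt (f := atTop) (u := F)
    (tendsto_principal.2 <| .of_forall fun k x _ => subset_closure (mem_range_self k))
  have hlip : LipschitzWith K f :=
    (isClosed_setOfPred_lipschitzWith K).mem_of_mapClusterPt hf (.of_forall hF)
  obtain ⟨D, hDcount, hDdense⟩ := TopologicalSpace.exists_countable_dense X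
  have := hDcount.to_subtype
  have hfD : MapClusterPt (D.domRestrict f) atTop fun k => D.domRestrict (F k) :=
    hf.continuousAt_comp (Pi.continuous_domRestrict D).continuousAt
  obtain ⟨φ, hφ, hlim⟩ := hfD.tendsto_subseq
  have hclosed : IsClosed {x | Tendsto (fun k => F (φ k) x) atTop (𝓝 (f x))} :=
    (LipschitzWith.uniformEquicontinuous (F ∘ φ) K fun k => hF (φ k)).equicontinuous
      |>.isClosed_setOfPred_tendsto hlip.continuous
  have hsubset : D ⊆ {x | Tendsto (fun k => F (φ k) x) atTop (𝓝 (f x))} := fun x hx =>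
    tendsto_pi_nhds.1 hlim ⟨x, hx⟩
  exact ⟨f, φ, hlip, hφ, fun x => hclosed.closure_subset_iff.2 hsubset (hDdense x)⟩

end LipschitzFunctions

section Critic

variable {X : Type*} [MeasurableSpace X]

lemma integral_sub_const_sub_integral_sub_const {μ ν : Measure X} [IsFiniteMeasure μ]
    [IsFiniteMeasure ν] (hμν : μ univ = ν univ) {f : X → ℝ} (hfμ : Integrable f μ)
    (hfν : Integrable f ν) (a : ℝ) :
    ∫ x, (f x - a) ∂μ - ∫ x, (f x - a) ∂ν = ∫ x, f x ∂μ - ∫ x, f x ∂ν := by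
  rw [integral_sub hfμ (integrable_const a), integral_sub hfν (integrable_const a), integral_const,
    integral_const, measureReal_def, measureReal_def, hμν]
  ring

variable [PseudoMetricSpace X]

/-- `f` maximizes the dual objective `∫ f ∂μ - ∫ f ∂ν` among the 1-Lipschitz functions. -/
structure IsOptimalCritic (f : X → ℝ) (μ ν : Measure X) : Prop where
  lipschitzWith : LipschitzWith 1 f
  integral_sub_le : ∀ g : X → ℝ, LipschitzWith 1 g →
    ∫ x, g x ∂μ - ∫ x, g x ∂ν ≤ ∫ x, f x ∂μ - ∫ x, f x ∂ν

variable [OpensMeasurableSpace X] {μ ν : Measure X} {x₀ : X}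

lemma integrable_of_lipschitzWith_one [IsFiniteMeasure μ] {f : X → ℝ} (hf : LipschitzWith 1 f)
    (hμ : Integrable (fun x => dist x x₀) μ) : Integrable f μ := by
  have hsub : Integrable (fun x => f x - f x₀) μ :=
    hμ.mono' (hf.continuous.aestronglyMeasurable.sub aestronglyMeasurable_const) <|
      .of_forall fun x => by simpa [Real.dist_eq] using hf.dist_le_mul x x₀
  simpa using (integrable_add_const_iff (c := f x₀)).2 hsub

lemma integral_sub_integral_le_of_lipschitzWith_one [IsFiniteMeasure μ] [IsFiniteMeasure ν]
    (hμ : Integrable (fun x => dist x x₀) μ) (hν : Integrable (fun x => dist x x₀) ν)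
    {f : X → ℝ} (hf : LipschitzWith 1 f) (hx₀ : f x₀ = 0) :
    ∫ x, f x ∂μ - ∫ x, f x ∂ν ≤ ∫ x, dist x x₀ ∂μ + ∫ x, dist x x₀ ∂ν := by
  have hupper : ∫ x, f x ∂μ ≤ ∫ x, dist x x₀ ∂μ :=
    integral_mono (integrable_of_lipschitzWith_one hf hμ) hμ fun x =>
      le_of_abs_le (abs_le_dist_of_lipschitzWith_one hf hx₀ x)
  have hlower : -∫ x, f x ∂ν ≤ ∫ x, dist x x₀ ∂ν := by
    rw [← integral_neg]
    exact integral_mono (integrable_of_lipschitzWith_one hf hν).neg hν fun x =>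
      (neg_le_abs _).trans (abs_le_dist_of_lipschitzWith_one hf hx₀ x)
  linarith

lemma tendsto_integral_of_lipschitzWith_one (hμ : Integrable (fun x => dist x x₀) μ)
    {F : ℕ → X → ℝ} {f : X → ℝ} (hF : ∀ k, LipschitzWith 1 (F k)) (hx₀ : ∀ k, F k x₀ = 0)
    (hlim : ∀ x, Tendsto (fun k => F k x) atTop (𝓝 (f x))) :
    Tendsto (fun k => ∫ x, F k x ∂μ) atTop (𝓝 (∫ x, f x ∂μ)) :=
  tendsto_integral_of_dominated_convergence (fun x => dist x x₀)
    (fun k => (hF k).continuous.aestronglyMeasurable) hμ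
    (fun k => .of_forall (abs_le_dist_of_lipschitzWith_one (hF k) (hx₀ k))) (.of_forall hlim)

variable [SecondCountableTopology X] [IsFiniteMeasure μ] [IsFiniteMeasure ν]

lemma exists_lipschitzWith_one_forall_normalized_le (hμ : Integrable (fun x => dist x x₀) μ)
    (hν : Integrable (fun x => dist x x₀) ν) :
    ∃ f : X → ℝ, LipschitzWith 1 f ∧ ∀ g : X → ℝ, LipschitzWith 1 g → g x₀ = 0 →
      ∫ x, g x ∂μ - ∫ x, g x ∂ν ≤ ∫ x, f x ∂μ - ∫ x, f x ∂ν := by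
  let gap (g : X → ℝ) : ℝ := ∫ x, g x ∂μ - ∫ x, g x ∂ν
  let gaps : Set ℝ := gap '' {g | LipschitzWith 1 g ∧ g x₀ = 0}
  have hbdd : BddAbove gaps := ⟨_, forall_mem_image.2 fun g hg =>
    integral_sub_integral_le_of_lipschitzWith_one hμ hν hg.1 hg.2⟩
  have hnonempty : gaps.Nonempty := ⟨gap 0, 0, ⟨LipschitzWith.const' 0, rfl⟩, rfl⟩
  obtain ⟨u, -, hu, hmem⟩ := exists_seq_tendsto_sSup hnonempty hbdd
  choose F hF hFu using hmem
  obtain ⟨f, φ, hf, hφ, hlim⟩ := exists_subseq_tendsto_of_lipschitzWith (fun k => (hF k).1)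
    fun x => (Metric.isBounded_closedBall (x := 0) (r := dist x x₀)).subset <|
      range_subset_iff.2 fun k => by
        simpa using abs_le_dist_of_lipschitzWith_one (hF k).1 (hF k).2 x
  have hgap_lim : Tendsto (fun k => gap (F (φ k))) atTop (𝓝 (gap f)) :=
    (tendsto_integral_of_lipschitzWith_one hμ (fun k => (hF _).1) (fun k => (hF _).2) hlim).sub
      (tendsto_integral_of_lipschitzWith_one hν (fun k => (hF _).1) (fun k => (hF _).2) hlim)
  have hgap : gap f = sSup gaps := by
    simp only [hFu] at hgap_lim
    exact tendsto_nhds_unique hgap_lim (hu.comp hφ.tendsto_atTop)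
  exact ⟨f, hf, fun g hg hgx₀ => (le_csSup hbdd ⟨g, ⟨hg, hgx₀⟩, rfl⟩).trans_eq hgap.symm⟩

theorem exists_isOptimalCritic (hμ : Integrable (fun x => dist x x₀) μ)
    (hν : Integrable (fun x => dist x x₀) ν) (hμν : μ univ = ν univ) :
    ∃ f, IsOptimalCritic f μ ν := by
  obtain ⟨f, hf, hmax⟩ := exists_lipschitzWith_one_forall_normalized_le hμ hν
  refine ⟨f, hf, fun g hg => ?_⟩
  have hnormalized : LipschitzWith 1 fun x => g x - g x₀ :=
    .of_dist_le_mul fun x y => by simpa using hg.dist_le_mul x y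
  rw [← integral_sub_const_sub_integral_sub_const hμν (integrable_of_lipschitzWith_one hg hμ)
    (integrable_of_lipschitzWith_one hg hν) (g x₀)]
  exact hmax _ hnormalized (sub_self _)

end Critic

section Duality

variable {X : Type*} [PseudoMetricSpace X] [SecondCountableTopology X] [MeasurableSpace X]
  [OpensMeasurableSpace X] {μ ν : Measure X} {π : Measure (X × X)} {x₀ : X}

lemma IsCoupling.integrable_dist (hπ : IsCoupling π μ ν)
    (hμ : Integrable (fun x => dist x x₀) μ) (hν : Integrable (fun x => dist x x₀) ν) :
    Integrable (fun p => dist p.1 p.2) π :=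
  ((hπ.integrable_comp_fst hμ).add (hπ.integrable_comp_snd hν)).mono'
    continuous_dist.aestronglyMeasurable <| .of_forall fun p => by
      simpa [abs_of_nonneg dist_nonneg] using dist_triangle_right p.1 p.2 x₀

variable [IsFiniteMeasure μ] [IsFiniteMeasure ν] {f : X → ℝ}

lemma IsCoupling.integral_sub_le_integral_dist (hπ : IsCoupling π μ ν)
    (hμ : Integrable (fun x => dist x x₀) μ) (hν : Integrable (fun x => dist x x₀) ν)
    (hf : LipschitzWith 1 f) :
    ∫ x, f x ∂μ - ∫ x, f x ∂ν ≤ ∫ p, dist p.1 p.2 ∂π := by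
  have hfμ := integrable_of_lipschitzWith_one hf hμ
  have hfν := integrable_of_lipschitzWith_one hf hν
  rw [← hπ.integral_sub_eq hfμ hfν]
  exact integral_mono ((hπ.integrable_comp_fst hfμ).sub (hπ.integrable_comp_snd hfν))
    (hπ.integrable_dist hμ hν) fun p => sub_le_dist_of_lipschitzWith_one hf p.1 p.2

lemma IsCoupling.integral_sub_eq_integral_dist_iff (hπ : IsCoupling π μ ν)
    (hμ : Integrable (fun x => dist x x₀) μ) (hν : Integrable (fun x => dist x x₀) ν)
    (hf : LipschitzWith 1 f) :
    ∫ x, f x ∂μ - ∫ x, f x ∂ν = ∫ p, dist p.1 p.2 ∂π ↔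
      ∀ p ∈ π.support, f p.1 - f p.2 = dist p.1 p.2 := by
  have hfμ := integrable_of_lipschitzWith_one hf hμ
  have hfν := integrable_of_lipschitzWith_one hf hν
  have hclosed : IsClosed {p : X × X | f p.1 - f p.2 = dist p.1 p.2} :=
    isClosed_eq ((hf.continuous.comp continuous_fst).sub (hf.continuous.comp continuous_snd))
      continuous_dist
  have hdiff : Integrable (fun p : X × X => f p.1 - f p.2) π :=
    (hπ.integrable_comp_fst hfμ).sub (hπ.integrable_comp_snd hfν)
  rw [← hπ.integral_sub_eq hfμ hfν, integral_eq_iff_of_ae_le hdiff (hπ.integrable_dist hμ hν)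
    (.of_forall fun p => sub_le_dist_of_lipschitzWith_one hf p.1 p.2)]
  exact ⟨fun hae _ hp => Measure.support_subset_of_isClosed hclosed hae hp,
    fun hsupp => mem_of_superset Measure.support_mem_ae hsupp⟩

theorem optimal_coupling_iff_critic_exhausts_general (hμ : Integrable (fun x => dist x x₀) μ)
    (hν : Integrable (fun x => dist x x₀) ν) (hπ : IsCoupling π μ ν) :
    IsOptimalCoupling (fun p => dist p.1 p.2) π μ ν ↔
      ∀ f, IsOptimalCritic f μ ν → ∀ p ∈ π.support, f p.1 - f p.2 = dist p.1 p.2 := by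
  have hslack {f : X → ℝ} (hf : LipschitzWith 1 f) :=
    hπ.integral_sub_eq_integral_dist_iff hμ hν hf
  constructor
  · intro hopt f hf
    have := hπ.isFiniteMeasure
    have : Nonempty X := ⟨x₀⟩
    obtain ⟨g, hg, hexhausts⟩ := (hopt.isCyclicallyMonotone_support continuous_dist
      (hπ.integrable_dist hμ hν)).exists_lipschitzWith_one
    refine (hslack hf.lipschitzWith).1 <| le_antisymm
      (hπ.integral_sub_le_integral_dist hμ hν hf.lipschitzWith) ?_
    calc ∫ p, dist p.1 p.2 ∂π = ∫ x, g x ∂μ - ∫ x, g x ∂ν := ((hslack hg).2 hexhausts).symm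
      _ ≤ ∫ x, f x ∂μ - ∫ x, f x ∂ν := hf.integral_sub_le g hg
  · intro hexhausts
    obtain ⟨f, hf⟩ := exists_isOptimalCritic hμ hν
      (hπ.measure_univ_left.trans hπ.measure_univ_right.symm)
    refine ⟨hπ, fun ρ hρ => ?_⟩
    calc ∫ p, dist p.1 p.2 ∂π = ∫ x, f x ∂μ - ∫ x, f x ∂ν :=
          ((hslack hf.lipschitzWith).2 (hexhausts f hf)).symm
      _ ≤ ∫ p, dist p.1 p.2 ∂ρ := hρ.integral_sub_le_integral_dist hμ hν hf.lipschitzWith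

end Duality

lemma measureSupport_eq_support {X : Type*} [TopologicalSpace X] [MeasurableSpace X]
    (π : Measure X) : measureSupport π = π.support := by
  rw [Measure.support_eq_forall_isOpen]
  exact Set.ext fun x => forall_congr' fun U => Imp.swap

/-- **Kantorovich duality, optimality characterization.** A coupling `π*` is optimal
iff every optimal 1-Lipschitz critic `f*` satisfies `f*(x) - f*(y) = ‖x - y‖` on the
support of `π*`. -/
theorem optimal_coupling_iff_critic_exhausts (n : ℕ)
    (μ ν : Measure (EuclideanSpace ℝ (Fin n)))
    [IsProbabilityMeasure μ] [IsProbabilityMeasure ν]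
    (hμ : Integrable (fun x => ‖x‖) μ) (hν : Integrable (fun x => ‖x‖) ν)
    (πs : Measure (EuclideanSpace ℝ (Fin n) × EuclideanSpace ℝ (Fin n)))
    [IsProbabilityMeasure πs]
    (hπ₁ : πs.map Prod.fst = μ) (hπ₂ : πs.map Prod.snd = ν) :
    (∀ π : Measure (EuclideanSpace ℝ (Fin n) × EuclideanSpace ℝ (Fin n)),
        IsProbabilityMeasure π → π.map Prod.fst = μ → π.map Prod.snd = ν →
          ∫ p, ‖p.1 - p.2‖ ∂πs ≤ ∫ p, ‖p.1 - p.2‖ ∂π)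
    ↔
    (∀ f : EuclideanSpace ℝ (Fin n) → ℝ, LipschitzWith 1 f →
        (∀ g : EuclideanSpace ℝ (Fin n) → ℝ, LipschitzWith 1 g →
            ∫ x, g x ∂μ - ∫ x, g x ∂ν ≤ ∫ x, f x ∂μ - ∫ x, f x ∂ν) →
        ∀ p ∈ measureSupport πs, f p.1 - f p.2 = ‖p.1 - p.2‖) := by
  have hopt := optimal_coupling_iff_critic_exhausts_general (x₀ := 0) (by simpa using hμ)
    (by simpa using hν) ⟨hπ₁, hπ₂⟩
  simp only [dist_eq_norm, ← measureSupport_eq_support] at hopt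
  exact ⟨fun h f hf hmax => hopt.1 ⟨⟨hπ₁, hπ₂⟩, fun π hπ =>
      h π hπ.isProbabilityMeasure hπ.fst_eq hπ.snd_eq⟩ f ⟨hf, hmax⟩,
    fun h π _ hπ₁ hπ₂ => (hopt.2 fun f hf => h f hf.1 hf.2).integral_le π ⟨hπ₁, hπ₂⟩⟩
end

section
/- Let α > 0 and let μ ≠ ν be two probability measures on ℝⁿ with finite first moments. Let f* : ℝⁿ → ℝ be α-Lipschitz and maximize ∫ f dμ − ∫ f dν over all α-Lipschitz functions f. Then f* exhausts the Lipschitz constraint: there exist points x ≠ y in ℝⁿ with f*(x) − f*(y) = α‖x − y‖. -/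
open MeasureTheory

/-!
Suppose the constraint is strict, `f x - f y < α * dist x y` for all `x ≠ y`. For compact `K`, the
largest `α`-Lipschitz extension `φ` of `f` from `K` satisfies `f ≤ φ`, and strictness together with
compactness forces equality to hold exactly on `K`. The competitor `min f (φ - ε)` is again
`α`-Lipschitz and lowers `f` by `(ε - (φ - f))⁺`, which equals `ε` on `K`, is at most `ε`, and
vanishes where `ε ≤ φ - f`. Optimality of `f` therefore gives `ν K ≤ μ {φ - f < ε}`, and `ε → 0`
yields `ν K ≤ μ K`. By inner regularity `ν ≤ μ`, so the two probability measures coincide.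
-/

open Set Filter
open scoped NNReal Topology

section McShaneExtension

/-- The upper McShane extension of `f` from `s`: the largest `α`-Lipschitz function that agrees
with an `α`-Lipschitz `f` on `s`. It takes the junk value `0` when `s` is empty. -/
noncomputable def mcShaneExtension {X : Type*} [PseudoMetricSpace X] (α : ℝ≥0) (f : X → ℝ)
    (s : Set X) (x : X) : ℝ :=
  ⨅ y : s, (f y + α * dist x y)

section PseudoMetricSpace

variable {X : Type*} [PseudoMetricSpace X] {α : ℝ≥0} {f : X → ℝ} {s : Set X}

lemma mcShaneExtension_le (hf : LipschitzWith α f) {y : X} (hy : y ∈ s) (x : X) :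
    mcShaneExtension α f s x ≤ f y + α * dist x y := by
  have lower_bound : f x ∈ lowerBounds (range fun y : s => f y + α * dist x y) := by
    rintro _ ⟨z, rfl⟩
    exact hf.le_add_mul x z
  exact ciInf_le ⟨f x, lower_bound⟩ (⟨y, hy⟩ : s)

lemma le_mcShaneExtension (hf : LipschitzWith α f) (hs : s.Nonempty) :
    f ≤ mcShaneExtension α f s := by
  have := hs.to_subtype
  exact fun x => le_ciInf fun y => hf.le_add_mul x y

lemma lipschitzWith_mcShaneExtension (hf : LipschitzWith α f) (hs : s.Nonempty) :
    LipschitzWith α (mcShaneExtension α f s) := by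
  have := hs.to_subtype
  refine LipschitzWith.of_le_add_mul α fun x y => ?_
  rw [← sub_le_iff_le_add]
  refine le_ciInf fun z => ?_
  rw [sub_le_iff_le_add]
  calc
    mcShaneExtension α f s x ≤ f z + α * dist x z := mcShaneExtension_le hf z.2 x
    _ ≤ f z + α * (dist x y + dist y z) := by gcongr; exact dist_triangle x y z
    _ = f z + α * dist y z + α * dist x y := by ring

lemma exists_mcShaneExtension_eq (hf : Continuous f) (hs : IsCompact s) (hne : s.Nonempty)
    (x : X) : ∃ y ∈ s, mcShaneExtension α f s x = f y + α * dist x y := by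
  have cost_continuous : Continuous fun y => f y + α * dist x y := by fun_prop
  obtain ⟨y, hy, h_eq⟩ := hs.exists_sInf_image_eq hne cost_continuous.continuousOn
  exact ⟨y, hy, (sInf_image' (f := fun y => f y + α * dist x y)).symm.trans h_eq⟩

end PseudoMetricSpace

lemma mcShaneExtension_eq_iff_mem {X : Type*} [MetricSpace X] {α : ℝ≥0} {f : X → ℝ} {s : Set X}
    (hf : LipschitzWith α f) (h_ne : ∀ x y, x ≠ y → f x - f y ≠ α * dist x y)
    (hs : IsCompact s) (hne : s.Nonempty) {x : X} :
    mcShaneExtension α f s x = f x ↔ x ∈ s := by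
  constructor
  · intro h_eq
    obtain ⟨y, hy, hxy⟩ := exists_mcShaneExtension_eq (α := α) hf.continuous hs hne x
    obtain rfl : x = y := by
      by_contra hxy_ne
      exact h_ne x y hxy_ne (by linarith)
    exact hy
  · intro hx
    refine le_antisymm ?_ (le_mcShaneExtension hf hne x)
    simpa using mcShaneExtension_le hf hx x

end McShaneExtension

section PosPart

variable {X : Type*} [MeasurableSpace X] {μ : Measure X} [IsFiniteMeasure μ] {u : X → ℝ}

lemma integrable_posPart_const_sub (hu : Measurable u) (hu_nonneg : 0 ≤ u) (ε : ℝ) :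
    Integrable (fun x => (ε - u x)⁺) μ := by
  refine Integrable.of_mem_Icc 0 ε⁺ (by fun_prop) (.of_forall fun x => ?_)
  exact ⟨posPart_nonneg _, posPart_mono (sub_le_self ε (hu_nonneg x))⟩

lemma mul_measureReal_eq_zero_le_integral_posPart (hu : Measurable u) (hu_nonneg : 0 ≤ u) {ε : ℝ}
    (hε : 0 ≤ ε) : ε * μ.real {x | u x = 0} ≤ ∫ x, (ε - u x)⁺ ∂μ := by
  have h_subset : {x | u x = 0} ⊆ {x | ε ≤ (ε - u x)⁺} := by
    intro x (hx : u x = 0)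
    simp [hx, le_posPart]
  calc
    ε * μ.real {x | u x = 0} ≤ ε * μ.real {x | ε ≤ (ε - u x)⁺} := by
      gcongr
      exact measure_ne_top μ _
    _ ≤ ∫ x, (ε - u x)⁺ ∂μ :=
      mul_meas_ge_le_integral_of_nonneg (.of_forall fun x => posPart_nonneg _)
        (integrable_posPart_const_sub hu hu_nonneg ε) ε

lemma integral_posPart_le_mul_measureReal_lt (hu : Measurable u) (hu_nonneg : 0 ≤ u) (ε : ℝ) :
    ∫ x, (ε - u x)⁺ ∂μ ≤ ε * μ.real {x | u x < ε} := by
  have h_meas : MeasurableSet {x | u x < ε} := measurableSet_lt hu measurable_const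
  have h_le : ∀ x, (ε - u x)⁺ ≤ {x | u x < ε}.indicator (fun _ => ε) x := by
    intro x
    by_cases hx : u x < ε
    · rw [indicator_of_mem (by exact hx), posPart_of_nonneg (sub_nonneg.2 hx.le)]
      exact sub_le_self ε (hu_nonneg x)
    · rw [indicator_of_notMem (by exact hx), posPart_of_nonpos (sub_nonpos.2 (not_lt.1 hx))]
  calc
    ∫ x, (ε - u x)⁺ ∂μ ≤ ∫ x, {x | u x < ε}.indicator (fun _ => ε) x ∂μ :=
      integral_mono (integrable_posPart_const_sub hu hu_nonneg ε)
        ((integrable_const ε).indicator h_meas) h_le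
    _ = ε * μ.real {x | u x < ε} := by
      rw [integral_indicator_const ε h_meas, smul_eq_mul, mul_comm]

lemma tendsto_measure_lt_nhdsGT (hu : Measurable u) (a : ℝ) :
    Tendsto (fun ε => μ {x | u x < ε}) (𝓝[>] a) (𝓝 (μ {x | u x ≤ a})) := by
  have h_inter : ⋂ ε > a, {x | u x < ε} = {x | u x ≤ a} := by
    ext x
    simp only [mem_iInter, mem_ofPred_eq]
    exact forall_gt_iff_le
  rw [← h_inter]
  exact tendsto_measure_biInter_gt
    (fun ε _ => (measurableSet_lt hu measurable_const).nullMeasurableSet)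
    (fun _ _ _ hle _ hx => lt_of_lt_of_le hx hle) ⟨a + 1, lt_add_one a, measure_ne_top μ _⟩

lemma measure_eq_zero_le_of_integral_posPart_le {ν : Measure X} [IsFiniteMeasure ν]
    (hu : Measurable u) (hu_nonneg : 0 ≤ u)
    (h : ∀ ε > 0, ∫ x, (ε - u x)⁺ ∂ν ≤ ∫ x, (ε - u x)⁺ ∂μ) :
    ν {x | u x = 0} ≤ μ {x | u x = 0} := by
  have h_lt : ∀ ε > 0, ν {x | u x = 0} ≤ μ {x | u x < ε} := by
    intro ε hε
    have h_mul : ε * ν.real {x | u x = 0} ≤ ε * μ.real {x | u x < ε} :=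
      (mul_measureReal_eq_zero_le_integral_posPart hu hu_nonneg hε.le).trans <|
        (h ε hε).trans (integral_posPart_le_mul_measureReal_lt hu hu_nonneg ε)
    exact (ENNReal.toReal_le_toReal (measure_ne_top _ _) (measure_ne_top _ _)).1
      (le_of_mul_le_mul_left h_mul hε)
  have h_zero : {x | u x = 0} = {x | u x ≤ 0} :=
    Set.ext fun x => ((hu_nonneg x).ge_iff_eq').symm
  calc
    ν {x | u x = 0} ≤ μ {x | u x ≤ 0} :=
      ge_of_tendsto (tendsto_measure_lt_nhdsGT hu 0) (eventually_mem_nhdsWithin.mono h_lt)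
    _ = μ {x | u x = 0} := by rw [h_zero]

end PosPart

lemma lipschitzWith_iff_sub_le {E : Type*} [SeminormedAddCommGroup E] {α : ℝ≥0} {f : E → ℝ} :
    LipschitzWith α f ↔ ∀ x y, f x - f y ≤ α * ‖x - y‖ := by
  simp only [LipschitzWith.iff_le_add_mul, dist_eq_norm, sub_le_iff_le_add']

lemma integrable_of_lipschitzWith {X : Type*} [PseudoMetricSpace X] [MeasurableSpace X]
    [OpensMeasurableSpace X] {μ : Measure X} [IsFiniteMeasure μ] {α : ℝ≥0} {f : X → ℝ}
    (hf : LipschitzWith α f) {x₀ : X} (hμ : Integrable (fun x => dist x x₀) μ) :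
    Integrable f μ := by
  refine ((integrable_const ‖f x₀‖).add (hμ.const_mul α)).mono'
    hf.continuous.aestronglyMeasurable (.of_forall fun x => ?_)
  calc
    ‖f x‖ ≤ ‖f x₀‖ + ‖f x - f x₀‖ := norm_le_norm_add_norm_sub' _ _
    _ ≤ ‖f x₀‖ + α * dist x x₀ := by
      rw [← dist_eq_norm]
      gcongr
      exact hf.dist_le_mul x x₀

lemma measure_le_of_forall_isCompact_le {X : Type*} [TopologicalSpace X] [MeasurableSpace X]
    {μ ν : Measure X} [ν.InnerRegular] (h : ∀ K, IsCompact K → ν K ≤ μ K) : ν ≤ μ := by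
  refine Measure.le_iff.2 fun A hA => ?_
  rw [hA.measure_eq_iSup_isCompact]
  exact iSup₂_le fun K hKA => iSup_le fun hK => (h K hK).trans (measure_mono hKA)

/-- `f` is an optimal `α`-Lipschitz critic (a Kantorovich potential) for the pair `(μ, ν)`. Its
competitors are only the `α`-Lipschitz functions integrable for both measures, so that no integral
takes its junk value. -/
structure IsOptimalCritic_s3 {X : Type*} [PseudoMetricSpace X] [MeasurableSpace X] (α : ℝ≥0)
    (μ ν : Measure X) (f : X → ℝ) : Prop where
  lipschitzWith : LipschitzWith α f
  integrable_left : Integrable f μ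
  integrable_right : Integrable f ν
  integral_sub_integral_le : ∀ g : X → ℝ, LipschitzWith α g → Integrable g μ → Integrable g ν →
    ∫ x, g x ∂μ - ∫ x, g x ∂ν ≤ ∫ x, f x ∂μ - ∫ x, f x ∂ν

namespace IsOptimalCritic_s3

section PseudoMetricSpace

variable {X : Type*} [PseudoMetricSpace X] [MeasurableSpace X] [OpensMeasurableSpace X]
  {α : ℝ≥0} {μ ν : Measure X} [IsFiniteMeasure μ] [IsFiniteMeasure ν] {f φ : X → ℝ}

lemma of_integrable_dist {x₀ : X} (hμ : Integrable (fun x => dist x x₀) μ)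
    (hν : Integrable (fun x => dist x x₀) ν) (hf : LipschitzWith α f)
    (hopt : ∀ g : X → ℝ, LipschitzWith α g →
      ∫ x, g x ∂μ - ∫ x, g x ∂ν ≤ ∫ x, f x ∂μ - ∫ x, f x ∂ν) :
    IsOptimalCritic_s3 α μ ν f where
  lipschitzWith := hf
  integrable_left := integrable_of_lipschitzWith hf hμ
  integrable_right := integrable_of_lipschitzWith hf hν
  integral_sub_integral_le g hg _ _ := hopt g hg

lemma integral_posPart_le (hf : IsOptimalCritic_s3 α μ ν f) (hφ : LipschitzWith α φ) (hfφ : f ≤ φ)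
    (ε : ℝ) : ∫ x, (ε - (φ x - f x))⁺ ∂ν ≤ ∫ x, (ε - (φ x - f x))⁺ ∂μ := by
  have gap_measurable : Measurable fun x => φ x - f x :=
    (hφ.continuous.sub hf.lipschitzWith.continuous).measurable
  have gap_nonneg : 0 ≤ fun x => φ x - f x := fun x => sub_nonneg.2 (hfφ x)
  have drop_μ := integrable_posPart_const_sub (μ := μ) gap_measurable gap_nonneg ε
  have drop_ν := integrable_posPart_const_sub (μ := ν) gap_measurable gap_nonneg ε
  have competitor_eq :
      (fun x => f x - (ε - (φ x - f x))⁺) = fun x => min (f x) (φ x - ε) := by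
    funext x
    rw [posPart_def, sub_sup, sub_zero, inf_comm]
    congr 1
    ring
  have competitor_lipschitz : LipschitzWith α fun x => f x - (ε - (φ x - f x))⁺ := by
    rw [competitor_eq]
    simpa using hf.lipschitzWith.min (hφ.sub (LipschitzWith.const ε))
  have h_opt := hf.integral_sub_integral_le _ competitor_lipschitz
    (hf.integrable_left.sub drop_μ) (hf.integrable_right.sub drop_ν)
  rw [integral_sub hf.integrable_left drop_μ, integral_sub hf.integrable_right drop_ν] at h_opt
  linarith

lemma measure_setOf_eq_le (hf : IsOptimalCritic_s3 α μ ν f) (hφ : LipschitzWith α φ) (hfφ : f ≤ φ) :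
    ν {x | φ x = f x} ≤ μ {x | φ x = f x} := by
  have gap_measurable : Measurable fun x => φ x - f x :=
    (hφ.continuous.sub hf.lipschitzWith.continuous).measurable
  simpa only [sub_eq_zero] using measure_eq_zero_le_of_integral_posPart_le gap_measurable
    (fun x => sub_nonneg.2 (hfφ x)) fun ε _ => hf.integral_posPart_le hφ hfφ ε

end PseudoMetricSpace

lemma measure_le_of_isCompact {X : Type*} [MetricSpace X] [MeasurableSpace X]
    [OpensMeasurableSpace X] {α : ℝ≥0} {μ ν : Measure X} [IsFiniteMeasure μ] [IsFiniteMeasure ν]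
    {f : X → ℝ} (hf : IsOptimalCritic_s3 α μ ν f)
    (h_ne : ∀ x y, x ≠ y → f x - f y ≠ α * dist x y) {K : Set X} (hK : IsCompact K) :
    ν K ≤ μ K := by
  obtain rfl | hK_nonempty := K.eq_empty_or_nonempty
  · simp
  have contact_set : {x | mcShaneExtension α f K x = f x} = K :=
    Set.ext fun x => mcShaneExtension_eq_iff_mem hf.lipschitzWith h_ne hK hK_nonempty
  simpa only [contact_set] using hf.measure_setOf_eq_le
    (lipschitzWith_mcShaneExtension hf.lipschitzWith hK_nonempty)
    (le_mcShaneExtension hf.lipschitzWith hK_nonempty)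

end IsOptimalCritic_s3

theorem optimal_critic_exhausts_lipschitz_constraint_general {X : Type*} [MetricSpace X]
    [MeasurableSpace X] [OpensMeasurableSpace X] {α : ℝ≥0} {μ ν : Measure X}
    [IsProbabilityMeasure μ] [IsProbabilityMeasure ν] [ν.InnerRegular] (hμν : μ ≠ ν) {f : X → ℝ}
    (hf : IsOptimalCritic_s3 α μ ν f) : ∃ x y, x ≠ y ∧ f x - f y = α * dist x y := by
  by_contra! h_ne
  have h_le : ν ≤ μ := measure_le_of_forall_isCompact_le fun K => hf.measure_le_of_isCompact h_ne
  exact hμν (Measure.eq_of_le_of_isProbabilityMeasure h_le).symm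

/-- **Exhaustion of the Lipschitz constraint.** If `μ ≠ ν` have finite first moments and
`f*` is an optimal `α`-Lipschitz critic, then there are points `x ≠ y` with
`f*(x) - f*(y) = α‖x - y‖`. -/
theorem optimal_critic_exhausts_lipschitz_constraint (n : ℕ) (α : ℝ) (hα : 0 < α)
    (μ ν : Measure (EuclideanSpace ℝ (Fin n)))
    [IsProbabilityMeasure μ] [IsProbabilityMeasure ν]
    (hμ : Integrable (fun x => ‖x‖) μ) (hν : Integrable (fun x => ‖x‖) ν)
    (hμν : μ ≠ ν)
    (f : EuclideanSpace ℝ (Fin n) → ℝ)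
    (hf : ∀ x y, f x - f y ≤ α * ‖x - y‖)
    (hopt : ∀ g : EuclideanSpace ℝ (Fin n) → ℝ, (∀ x y, g x - g y ≤ α * ‖x - y‖) →
        ∫ x, g x ∂μ - ∫ x, g x ∂ν ≤ ∫ x, f x ∂μ - ∫ x, f x ∂ν) :
    ∃ x y : EuclideanSpace ℝ (Fin n), x ≠ y ∧ f x - f y = α * ‖x - y‖ := by
  lift α to ℝ≥0 using hα.le
  simp only [← lipschitzWith_iff_sub_le] at hf hopt
  rw [← funext dist_zero_right] at hμ hν
  simpa only [dist_eq_norm] using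
    optimal_critic_exhausts_lipschitz_constraint_general hμν (.of_integrable_dist hμ hν hf hopt)
end
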